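/- arXiv:1805.02304 — 5 statements merged into one kernel-verified Lean document; each statement's English description precedes it below -/
import Mathlib

section
/- Let G be a log combinatorial type with minimal monoid M̄(G) ⊆ A, and let P be a cancellative, torsion-free, saturated commutative monoid. Suppose given elements ē_v ∈ P (for v ∈ V) and ρ̄_l ∈ P (for l ∈ E) such that ē_v = 0 for every v ∈ Vⁿ and ē_{v'_l} = ē_{v_l} + c_l·ρ̄_l for every l ∈ E. Then there exists a unique monoid homomorphism φ : M̄(G) → P sending the image of e_v in A to ē_v for every v ∈ V and the image of ρ_l in A to ρ̄_l for every l ∈ E. -/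
/-!
Let `ι : P → P^gp` be the canonical map to the Grothendieck group. As `P` is cancellative, `ι` is
injective, and as `P` is torsion-free, so is `P^gp`. The defining relations of `𝒢` hold for
`ι ē_v` and `ι ρ̄_l`, so these elements determine a homomorphism `𝒢 → P^gp`, which kills the
torsion subgroup and descends to `toGroup : A → P^gp`. It sends the generators of `N` into `ι P`,
hence `N` into `ι P`, and, `P` being saturated, also the saturation `M̄(G)` of `N` into `ι P`
(`exists_toGroup_eq`). Composing with the inverse of `ι` on its image gives `φ`.

For uniqueness (`minMonoid_hom_ext`), two homomorphisms agreeing on the generators agree on `N`;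
every `x ∈ M̄(G)` has a multiple `n • x ∈ N` with `n ≥ 1`, and `n` may be cancelled in `P`.
-/

/-- The saturation of a submonoid `N` in an ambient abelian group `A`:
the smallest submonoid of `A` containing `N` that is saturated in `A`. -/
def AddSubmonoid.saturationIn {A : Type*} [AddCommGroup A] (N : AddSubmonoid A) :
    AddSubmonoid A where
  carrier := {x | ∃ n : ℕ, 1 ≤ n ∧ n • x ∈ N}
  zero_mem' := ⟨1, le_refl 1, by simpa using N.zero_mem⟩
  add_mem' := by
    rintro x y ⟨n, hn, hx⟩ ⟨m, hm, hy⟩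
    refine ⟨n * m, Nat.mul_pos hn hm, ?_⟩
    have h : (n * m) • (x + y) = m • (n • x) + n • (m • y) := by
      rw [smul_add, ← mul_smul, ← mul_smul, mul_comm m n]
    rw [h]
    exact N.add_mem (N.nsmul_mem hx m) (N.nsmul_mem hy n)

/-- A log combinatorial type: a finite set of vertices partitioned into
non-degenerate (`Vn`) and degenerate vertices, a finite set of edges with
endpoints `src`, `tgt`, and a contact order `c l : ℕ` on each edge. -/
structure LogCombType where
  V : Type
  E : Type
  [fintV : Fintype V]
  [fintE : Fintype E]
  Vn : Set V
  src : E → V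
  tgt : E → V
  c : E → ℕ

attribute [instance] LogCombType.fintV LogCombType.fintE

namespace LogCombType

variable (G : LogCombType)

/-- The free abelian group on the generators `e_v` and `ρ_l`. -/
abbrev Free : Type := FreeAbelianGroup (G.V ⊕ G.E)

/-- The generator `e_v`. -/
def eFree (v : G.V) : G.Free := FreeAbelianGroup.of (Sum.inl v)

/-- The generator `ρ_l`. -/
def ρFree (l : G.E) : G.Free := FreeAbelianGroup.of (Sum.inr l)

/-- The subgroup of relations: `e_v = 0` for `v ∈ Vⁿ` and
`e_{tgt l} = e_{src l} + c l • ρ_l` for all edges `l`. -/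
def rels : AddSubgroup G.Free :=
  AddSubgroup.closure
    ({x | ∃ v ∈ G.Vn, x = G.eFree v} ∪
     {x | ∃ l : G.E, x = G.eFree (G.tgt l) - (G.eFree (G.src l) + G.c l • G.ρFree l)})

/-- The presented abelian group `𝒢`. -/
abbrev Pres : Type := G.Free ⧸ G.rels

/-- The torsion-free quotient `A = 𝒢/𝒢ᵗ`. -/
abbrev A : Type := G.Pres ⧸ AddCommGroup.torsion G.Pres

/-- The image of `e_v` in `A`. -/
def eA (v : G.V) : G.A :=
  QuotientAddGroup.mk' _ (QuotientAddGroup.mk' G.rels (G.eFree v))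

/-- The image of `ρ_l` in `A`. -/
def ρA (l : G.E) : G.A :=
  QuotientAddGroup.mk' _ (QuotientAddGroup.mk' G.rels (G.ρFree l))

/-- The submonoid `N ⊆ A` generated by the images of the `e_v` and `ρ_l`. -/
def N : AddSubmonoid G.A :=
  AddSubmonoid.closure (Set.range G.eA ∪ Set.range G.ρA)

/-- The minimal monoid `M̄(G)`: the saturation of `N` in `A`. -/
def minMonoid : AddSubmonoid G.A := G.N.saturationIn

end LogCombType

/-- A commutative monoid `P` is saturated if (it is cancellative and) for every
element `x` of its Grothendieck group `P^gp`, if `n • x` lies in the image of `P`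
for some `n ≥ 1`, then `x` lies in the image of `P`. -/
def IsSaturatedAddMonoid (P : Type*) [AddCommMonoid P] : Prop :=
  ∀ (x : AddLocalization (⊤ : AddSubmonoid P)) (n : ℕ), 1 ≤ n →
    (∃ p : P, AddLocalization.mk p 0 = n • x) → ∃ p : P, AddLocalization.mk p 0 = x

namespace LogCombType

open Algebra

variable {G : LogCombType}

lemma eA_mem_N (v : G.V) : G.eA v ∈ G.N :=
  AddSubmonoid.subset_closure (Or.inl ⟨v, rfl⟩)

lemma ρA_mem_N (l : G.E) : G.ρA l ∈ G.N :=
  AddSubmonoid.subset_closure (Or.inr ⟨l, rfl⟩)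

lemma N_le_minMonoid : G.N ≤ G.minMonoid :=
  fun x hx => ⟨1, le_rfl, by rwa [one_nsmul]⟩

section Lift

variable {H : Type*} [AddCommGroup H] (e : G.V → H) (r : G.E → H)

/-- The homomorphism from the free abelian group with prescribed values on the generators. -/
def freeLift : G.Free →+ H := FreeAbelianGroup.lift (Sum.elim e r)

lemma freeLift_eFree (v : G.V) : freeLift e r (G.eFree v) = e v := by
  simp [freeLift, eFree]

lemma freeLift_ρFree (l : G.E) : freeLift e r (G.ρFree l) = r l := by
  simp [freeLift, ρFree]

variable {e r}

lemma rels_le_ker (hVn : ∀ v ∈ G.Vn, e v = 0)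
    (hrel : ∀ l, e (G.tgt l) = e (G.src l) + G.c l • r l) :
    G.rels ≤ (freeLift e r).ker := by
  refine (AddSubgroup.closure_le _).2 ?_
  rintro x (⟨v, hv, rfl⟩ | ⟨l, rfl⟩)
  · simpa [AddMonoidHom.mem_ker, freeLift_eFree] using hVn v hv
  · simp [AddMonoidHom.mem_ker, freeLift_eFree, freeLift_ρFree, hrel l]

/-- Homomorphisms from `𝒢` to a torsion-free group kill torsion, so they descend to `A`. -/
lemma torsion_le_ker [IsAddTorsionFree H] (f : G.Pres →+ H) :
    AddCommGroup.torsion G.Pres ≤ f.ker := by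
  intro x hx
  have h := AddCommGroup.le_comap_torsion f hx
  rwa [AddCommGroup.isAddTorsionFree_iff_torsion_eq_bot.1 inferInstance] at h

/-- The homomorphism `A → H` to a torsion-free group determined by elements of `H` satisfying the
relations of `𝒢`. -/
def toGroup [IsAddTorsionFree H] (hVn : ∀ v ∈ G.Vn, e v = 0)
    (hrel : ∀ l, e (G.tgt l) = e (G.src l) + G.c l • r l) : G.A →+ H :=
  QuotientAddGroup.lift _
    (QuotientAddGroup.lift G.rels (freeLift e r) (rels_le_ker hVn hrel)) (torsion_le_ker _)

variable [IsAddTorsionFree H] (hVn : ∀ v ∈ G.Vn, e v = 0)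
  (hrel : ∀ l, e (G.tgt l) = e (G.src l) + G.c l • r l)

lemma toGroup_eA (v : G.V) : toGroup hVn hrel (G.eA v) = e v :=
  freeLift_eFree e r v

lemma toGroup_ρA (l : G.E) : toGroup hVn hrel (G.ρA l) = r l :=
  freeLift_ρFree e r l

end Lift

variable {P : Type*} [AddCancelCommMonoid P]

/-- A homomorphism `A → P^gp` taking the generators of `N` into a saturated `P` takes all of
`M̄(G)` into `P`. -/
lemma exists_toGroup_eq (hsat : IsSaturatedAddMonoid P) (g : G.A →+ GrothendieckAddGroup P)
    {e : G.V → P} {r : G.E → P} (he : ∀ v, g (G.eA v) = GrothendieckAddGroup.of (e v))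
    (hr : ∀ l, g (G.ρA l) = GrothendieckAddGroup.of (r l)) (x : G.minMonoid) :
    ∃ p : P, GrothendieckAddGroup.of p = g x := by
  have hN : G.N ≤ (AddMonoidHom.mrange (GrothendieckAddGroup.of (M := P))).comap g := by
    refine AddSubmonoid.closure_le.2 ?_
    rintro y (⟨v, rfl⟩ | ⟨l, rfl⟩)
    · exact ⟨e v, (he v).symm⟩
    · exact ⟨r l, (hr l).symm⟩
  obtain ⟨x, n, hn, hx⟩ := x
  obtain ⟨p, hp⟩ := hN hx
  obtain ⟨q, hq⟩ := hsat (g x) n hn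
    ⟨p, by rw [AddLocalization.mk_zero_eq_addMonoidOf_mk, ← map_nsmul]; exact hp⟩
  exact ⟨q, by rw [← hq, AddLocalization.mk_zero_eq_addMonoidOf_mk]; rfl⟩

lemma minMonoid_hom_ext [IsAddTorsionFree P] {φ ψ : G.minMonoid →+ P}
    (he : ∀ v, φ ⟨G.eA v, N_le_minMonoid (eA_mem_N v)⟩ = ψ ⟨G.eA v, N_le_minMonoid (eA_mem_N v)⟩)
    (hr : ∀ l, φ ⟨G.ρA l, N_le_minMonoid (ρA_mem_N l)⟩ = ψ ⟨G.ρA l, N_le_minMonoid (ρA_mem_N l)⟩) :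
    φ = ψ := by
  have hN : ∀ y (hy : y ∈ G.N),
      φ ⟨y, N_le_minMonoid hy⟩ = ψ ⟨y, N_le_minMonoid hy⟩ := by
    intro y hy
    induction hy using AddSubmonoid.closure_induction with
    | mem y hy =>
      obtain ⟨v, rfl⟩ | ⟨l, rfl⟩ := hy
      · exact he v
      · exact hr l
    | zero => exact (map_zero φ).trans (map_zero ψ).symm
    | add y z hy hz ihy ihz =>
      exact (map_add φ ⟨y, _⟩ ⟨z, _⟩).trans
        ((congrArg₂ (· + ·) ihy ihz).trans (map_add ψ ⟨y, _⟩ ⟨z, _⟩).symm)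
  ext ⟨x, n, hn, hx⟩
  refine nsmul_right_injective (Nat.one_le_iff_ne_zero.1 hn) ?_
  simp only [← map_nsmul]
  exact hN _ hx

end LogCombType

/-- Universal property of the minimal monoid: given a cancellative,
torsion-free, saturated commutative monoid `P` and elements `ē_v, ρ̄_l ∈ P`
satisfying the defining relations of the log combinatorial type `G`, there is a
unique monoid homomorphism `M̄(G) → P` sending (the image of) `e_v` to `ē_v` and
(the image of) `ρ_l` to `ρ̄_l`. -/
theorem LogCombType.minMonoid_universal (G : LogCombType)
    (P : Type*) [AddCancelCommMonoid P]
    (htf : ∀ (n : ℕ), 1 ≤ n → ∀ p q : P, n • p = n • q → p = q)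
    (hsat : IsSaturatedAddMonoid P)
    (ebar : G.V → P) (ρbar : G.E → P)
    (hVn : ∀ v ∈ G.Vn, ebar v = 0)
    (hrel : ∀ l : G.E, ebar (G.tgt l) = ebar (G.src l) + G.c l • ρbar l) :
    ∃! φ : ↥G.minMonoid →+ P,
      (∀ (v : G.V) (h : G.eA v ∈ G.minMonoid), φ ⟨G.eA v, h⟩ = ebar v) ∧
      (∀ (l : G.E) (h : G.ρA l ∈ G.minMonoid), φ ⟨G.ρA l, h⟩ = ρbar l) := by
  have : IsAddTorsionFree P := ⟨fun n hn p q h => htf n (Nat.one_le_iff_ne_zero.2 hn) p q h⟩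
  let ι : P →+ Algebra.GrothendieckAddGroup P := Algebra.GrothendieckAddGroup.of
  have hι : Function.Injective ι := Algebra.GrothendieckAddGroup.of_injective
  let g : G.A →+ Algebra.GrothendieckAddGroup P :=
    toGroup (e := fun v => ι (ebar v)) (r := fun l => ι (ρbar l))
      (fun v hv => by rw [hVn v hv, map_zero])
      (fun l => by rw [hrel l, map_add, map_nsmul])
  have he : ∀ v, g (G.eA v) = ι (ebar v) := toGroup_eA _ _
  have hr : ∀ l, g (G.ρA l) = ι (ρbar l) := toGroup_ρA _ _
  choose f hf using exists_toGroup_eq hsat g he hr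
  change ∀ x, ι (f x) = g x at hf
  let φ : G.minMonoid →+ P :=
    { toFun := f
      map_zero' := hι (by rw [hf, map_zero]; exact map_zero g)
      map_add' := fun x y => hι (by rw [map_add, hf, hf, hf]; exact map_add g _ _) }
  refine ⟨φ, ⟨fun v h => hι ((hf _).trans (he v)), fun l h => hι ((hf _).trans (hr l))⟩, ?_⟩
  rintro ψ ⟨hψe, hψr⟩
  refine minMonoid_hom_ext (fun v => ?_) (fun l => ?_)
  · exact (hψe v _).trans (hι ((hf _).trans (he v))).symm
  · exact (hψr l _).trans (hι ((hf _).trans (hr l))).symm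
end

section
/- Let G be a log combinatorial type, let E₀ = {l ∈ E : c_l = 0} be the set of edges with zero contact order, and let M̄(G)′ ⊆ A be the smallest submonoid of A that contains the images of all e_v (v ∈ V) and of the ρ_l with c_l > 0 and is saturated in A. Then the map M̄(G)′ ⊕ ℕ^{E₀} → M̄(G), (x, a) ↦ x + Σ_{l ∈ E₀} a(l)·ρ_l, is an isomorphism of monoids; in particular M̄(G) splits canonically as M̄(G)′ ⊕ ℕ^d with d = |E₀|, the factor ℕ^{E₀} being freely generated by the images of the ρ_l with c_l = 0, and the image of e_v is contained in M̄(G)′ for every v ∈ V. -/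
namespace LogCombType

variable (G : LogCombType)

open Classical in
/-- The homomorphism `𝒢 → ℤ` with `ρ_l ↦ 1` that sends all other generators to `0`, for an edge
`l` of zero contact order. It is well defined because `ρ_l` occurs in no relation. -/
noncomputable def coordPres (l : {l : G.E // G.c l = 0}) : G.Pres →+ ℤ :=
  QuotientAddGroup.lift G.rels
    (FreeAbelianGroup.lift (Sum.elim (fun _ => 0) (fun m => if m = l.1 then 1 else 0)))
    (by
      rw [rels, AddSubgroup.closure_le]
      rintro x (⟨v, -, rfl⟩ | ⟨m, rfl⟩)
      · simp [eFree]
      · by_cases h : m = l.1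
        · simp [eFree, ρFree, h, l.2]
        · simp [eFree, ρFree, h])

/-- The coordinate along `ρ_l` on `A`: the homomorphism induced by `coordPres`, which kills the
torsion of `𝒢` because `ℤ` is torsion-free. -/
noncomputable def coord (l : {l : G.E // G.c l = 0}) : G.A →+ ℤ :=
  QuotientAddGroup.lift _ (G.coordPres l)
    (by
      intro x hx
      obtain ⟨n, hn, hx⟩ := isOfFinAddOrder_iff_nsmul_eq_zero.1 hx
      have h := congrArg (G.coordPres l) hx
      rw [map_nsmul, map_zero] at h
      exact (smul_eq_zero.1 h).resolve_left hn.ne')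

@[simp] lemma coord_eA (l : {l : G.E // G.c l = 0}) (v : G.V) : G.coord l (G.eA v) = 0 := by
  simp [coord, coordPres, eA, eFree]

open Classical in
lemma coord_ρA (l : {l : G.E // G.c l = 0}) (m : G.E) :
    G.coord l (G.ρA m) = if m = l.1 then 1 else 0 := by
  simp [coord, coordPres, ρA, ρFree]

/-- The submonoid of `A` generated by the `e_v` and the `ρ_l` with `c l ≠ 0`; its saturation is
`M̄(G)′`. -/
abbrev Npos : AddSubmonoid G.A :=
  AddSubmonoid.closure (Set.range G.eA ∪ {x | ∃ l : G.E, G.c l ≠ 0 ∧ x = G.ρA l})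

lemma Npos_le : G.Npos ≤ G.N := by
  refine AddSubmonoid.closure_mono ?_
  rintro x (h | ⟨l, -, rfl⟩)
  · exact Or.inl h
  · exact Or.inr ⟨l, rfl⟩

lemma coord_of_mem_Npos (l : {l : G.E // G.c l = 0}) {x : G.A} (hx : x ∈ G.Npos) :
    G.coord l x = 0 := by
  classical
  induction hx using AddSubmonoid.closure_induction with
  | mem x h =>
    rcases h with ⟨v, rfl⟩ | ⟨m, hm, rfl⟩
    · simp
    · rw [coord_ρA, if_neg]
      rintro rfl
      exact hm l.2
  | zero => simp
  | add x y _ _ hx hy => simp [hx, hy]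

lemma coord_of_mem_sat (l : {l : G.E // G.c l = 0}) {x : G.A} (hx : x ∈ G.Npos.saturationIn) :
    G.coord l x = 0 := by
  obtain ⟨n, hn, hx⟩ := hx
  have h := G.coord_of_mem_Npos l hx
  rw [map_nsmul] at h
  exact (smul_eq_zero.1 h).resolve_left (by omega)

lemma coord_sum (l : {l : G.E // G.c l = 0}) (a : {l : G.E // G.c l = 0} → ℕ) :
    G.coord l (∑ m, a m • G.ρA m.1) = a l := by
  classical
  simp [map_sum, coord_ρA, ← Subtype.ext_iff]

lemma coord_nonneg_of_mem_N (l : {l : G.E // G.c l = 0}) {x : G.A} (hx : x ∈ G.N) :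
    0 ≤ G.coord l x := by
  classical
  rw [N] at hx
  induction hx using AddSubmonoid.closure_induction with
  | mem x h =>
    rcases h with ⟨v, rfl⟩ | ⟨m, rfl⟩
    · simp
    · rw [coord_ρA]
      split_ifs <;> simp
  | zero => simp
  | add x y _ _ hx hy => rw [map_add]; exact add_nonneg hx hy

lemma coord_nonneg (l : {l : G.E // G.c l = 0}) {x : G.A} (hx : x ∈ G.minMonoid) :
    0 ≤ G.coord l x := by
  obtain ⟨n, hn, hx⟩ := hx
  have h := G.coord_nonneg_of_mem_N l hx
  rw [map_nsmul, nsmul_eq_mul] at h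
  exact nonneg_of_mul_nonneg_right h (by exact_mod_cast hn)

/-- Removing the `ρ_l`-components with `c l = 0` from an element of `A`. -/
noncomputable def residue : G.A →+ G.A :=
  AddMonoidHom.id _ -
    ∑ l : {l : G.E // G.c l = 0}, ((zmultiplesHom G.A) (G.ρA l.1)).comp (G.coord l)

lemma residue_apply (x : G.A) :
    G.residue x = x - ∑ l : {l : G.E // G.c l = 0}, G.coord l x • G.ρA l.1 := by
  simp [residue, AddMonoidHom.finsetSum_apply]

lemma residue_mem_Npos {x : G.A} (hx : x ∈ G.N) : G.residue x ∈ G.Npos := by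
  classical
  rw [N] at hx
  induction hx using AddSubmonoid.closure_induction with
  | mem x h =>
    rcases h with ⟨v, rfl⟩ | ⟨m, rfl⟩
    · have : G.residue (G.eA v) = G.eA v := by simp [residue_apply]
      rw [this]
      exact AddSubmonoid.subset_closure (Or.inl ⟨v, rfl⟩)
    · by_cases hm : G.c m = 0
      · have : G.residue (G.ρA m) = 0 := by
          rw [residue_apply, Finset.sum_eq_single ⟨m, hm⟩]
          · simp [coord_ρA]
          · intro b _ hb
            rw [coord_ρA, if_neg (fun h => hb (Subtype.ext h.symm)), zero_smul]
          · simp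
        rw [this]
        exact zero_mem _
      · have : G.residue (G.ρA m) = G.ρA m := by
          rw [residue_apply, Finset.sum_eq_zero, sub_zero]
          intro b _
          rw [coord_ρA, if_neg (by rintro rfl; exact hm b.2), zero_smul]
        rw [this]
        exact AddSubmonoid.subset_closure (Or.inr ⟨m, hm, rfl⟩)
  | zero => rw [map_zero]; exact zero_mem _
  | add x y _ _ hx hy => rw [map_add]; exact add_mem hx hy

lemma residue_mem_sat {x : G.A} (hx : x ∈ G.minMonoid) : G.residue x ∈ G.Npos.saturationIn := by
  obtain ⟨n, hn, hx⟩ := hx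
  refine ⟨n, hn, ?_⟩
  rw [← map_nsmul]
  exact G.residue_mem_Npos hx

lemma add_sum_mem {x : G.A} (hx : x ∈ G.Npos.saturationIn) (a : {l : G.E // G.c l = 0} → ℕ) :
    x + ∑ l : {l : G.E // G.c l = 0}, a l • G.ρA l.1 ∈ G.minMonoid := by
  refine add_mem ?_ (sum_mem fun l _ => nsmul_mem ?_ _)
  · obtain ⟨n, hn, hx⟩ := hx
    exact ⟨n, hn, G.Npos_le hx⟩
  · exact ⟨1, le_rfl, by
      rw [one_smul]; exact AddSubmonoid.subset_closure (Or.inr ⟨l.1, rfl⟩)⟩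

/-- The map `(x, a) ↦ x + ∑ a(l) ρ_l`, with inverse `z ↦ (residue z, l ↦ coord l z)`. -/
noncomputable def splitting :
    (↥G.Npos.saturationIn × ({l : G.E // G.c l = 0} → ℕ)) ≃+ ↥G.minMonoid where
  toFun p := ⟨p.1 + ∑ l : {l : G.E // G.c l = 0}, p.2 l • G.ρA l.1, G.add_sum_mem p.1.2 p.2⟩
  -- `toNat` loses nothing, the coordinates being nonnegative on `M̄(G)`.
  invFun z := (⟨G.residue z, G.residue_mem_sat z.2⟩, fun l => (G.coord l z).toNat)
  left_inv := by
    rintro ⟨⟨x, hx⟩, a⟩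
    have h : ∀ l, G.coord l (x + ∑ m : {l : G.E // G.c l = 0}, a m • G.ρA m.1) = a l := by
      intro l
      rw [map_add, G.coord_of_mem_sat l hx, coord_sum, zero_add]
    refine Prod.ext (Subtype.ext ?_) (funext fun l => ?_)
    · simp only [residue_apply, h, natCast_zsmul, add_sub_cancel_right]
    · simp only [h, Int.toNat_natCast]
  right_inv := by
    rintro ⟨z, hz⟩
    refine Subtype.ext ?_
    have h : ∀ l : {l : G.E // G.c l = 0},
        (G.coord l z).toNat • G.ρA l.1 = G.coord l z • G.ρA l.1 := by
      intro l
      rw [← natCast_zsmul, Int.toNat_of_nonneg (G.coord_nonneg l hz)]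
    simp only [residue_apply, h, sub_add_cancel]
  map_add' := by
    rintro ⟨x, a⟩ ⟨y, b⟩
    refine Subtype.ext ?_
    simp only [Prod.fst_add, Prod.snd_add, AddSubmonoid.coe_add, Pi.add_apply, add_smul,
      Finset.sum_add_distrib]
    abel

end LogCombType

/-- Canonical splitting `M̄(G) ≅ M̄(G)′ ⊕ ℕ^{E₀}`, where `E₀` is the
set of edges with zero contact order, `M̄(G)′` is the smallest saturated submonoid of
`A` containing the images of all `e_v` and of the `ρ_l` with `c_l > 0`, the factor
`ℕ^{E₀}` is freely generated by the images of the `ρ_l` with `c_l = 0`, and the image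
of every `e_v` lies in `M̄(G)′`. -/
theorem LogCombType.minMonoid_splitting (G : LogCombType) :
    ∃ f : (↥((AddSubmonoid.closure
            (Set.range G.eA ∪ {x | ∃ l : G.E, G.c l ≠ 0 ∧ x = G.ρA l})).saturationIn) ×
          ({l : G.E // G.c l = 0} → ℕ)) ≃+ ↥G.minMonoid,
      (∀ x a, ((f (x, a) : G.A)) =
        (x : G.A) + ∑ l : {l : G.E // G.c l = 0}, a l • G.ρA l.1) ∧
      (∀ v : G.V, G.eA v ∈ (AddSubmonoid.closure
            (Set.range G.eA ∪ {x | ∃ l : G.E, G.c l ≠ 0 ∧ x = G.ρA l})).saturationIn) := by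
  exact ⟨G.splitting, fun _ _ => rfl, fun v =>
    ⟨1, le_rfl, by rw [one_smul]; exact AddSubmonoid.subset_closure (Or.inl ⟨v, rfl⟩)⟩⟩
end

section
/- Let G be a log combinatorial type and V_max ⊆ V a nonempty subset, with minimal monoid with uniform maximal degeneracy M̄(G, V_max) ⊆ B. Let E₀ = {l ∈ E : c_l = 0} and let M̄(G, V_max)′ ⊆ B be the smallest submonoid of B that contains the elements q(e_v) (v ∈ V), q(ρ_l) for the edges l with c_l > 0, and e_max − q(e_v) (v ∈ V), and that is saturated in B. Then the map M̄(G, V_max)′ ⊕ ℕ^{E₀} → M̄(G, V_max), (x, a) ↦ x + Σ_{l ∈ E₀} a(l)·q(ρ_l), is an isomorphism of monoids; in particular M̄(G, V_max) splits canonically as M̄(G, V_max)′ ⊕ ℕ^d with d = |E₀|, and the elements q(e_v) lie in M̄(G, V_max)′ for all v ∈ V. -/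
namespace LogCombType

variable (G : LogCombType)

/-- The subgroup of `A` generated by the differences `e_{v₁} − e_{v₂}`
for `v₁, v₂ ∈ V_max`. -/
def simRel (Vmax : Set G.V) : AddSubgroup G.A :=
  AddSubgroup.closure {x | ∃ v₁ ∈ Vmax, ∃ v₂ ∈ Vmax, x = G.eA v₁ - G.eA v₂}

/-- The torsion-free quotient `B = ((A/∼)/torsion)`. -/
abbrev B (Vmax : Set G.V) : Type :=
  (G.A ⧸ G.simRel Vmax) ⧸ AddCommGroup.torsion (G.A ⧸ G.simRel Vmax)

/-- The quotient group homomorphism `q : A → B`. -/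
def qB (Vmax : Set G.V) : G.A →+ G.B Vmax :=
  (QuotientAddGroup.mk' (AddCommGroup.torsion (G.A ⧸ G.simRel Vmax))).comp
    (QuotientAddGroup.mk' (G.simRel Vmax))

/-- The common image `e_max = q (e_{v₀})` of the vertices of `V_max`, computed at a
chosen vertex `v₀ ∈ V_max`. -/
def emaxB (Vmax : Set G.V) (v₀ : G.V) : G.B Vmax := G.qB Vmax (G.eA v₀)

/-- The submonoid `N′ ⊆ B` generated by `q(N)` together with the elements
`e_max − q(e_v)` for all vertices `v`. -/
def Nmax (Vmax : Set G.V) (v₀ : G.V) : AddSubmonoid (G.B Vmax) :=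
  AddSubmonoid.closure
    ((G.qB Vmax '' (G.N : Set G.A)) ∪
      Set.range fun v : G.V => G.emaxB Vmax v₀ - G.qB Vmax (G.eA v))

/-- The minimal monoid with uniform maximal degeneracy `M̄(G, V_max)`:
the saturation of `N′` in `B`. -/
def maxMonoid (Vmax : Set G.V) (v₀ : G.V) : AddSubmonoid (G.B Vmax) :=
  (G.Nmax Vmax v₀).saturationIn

end LogCombType

/-- Vanishing on generators passes to the saturation because the target has no torsion. -/
theorem AddSubmonoid.map_eq_zero_of_mem_saturationIn_closure {A ι : Type*} [AddCommGroup A]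
    {S : Set A} {φ : A →+ (ι → ℤ)} (hφ : ∀ s ∈ S, φ s = 0) {x : A}
    (hx : x ∈ (AddSubmonoid.closure S).saturationIn) : φ x = 0 := by
  obtain ⟨n, hn, hx⟩ := hx
  have h0 : closure S ≤ AddMonoidHom.mker φ := (closure_le).2 fun s hs => hφ s hs
  have h1 : n • φ x = 0 := by rw [← map_nsmul]; exact h0 hx
  exact (smul_eq_zero.1 h1).resolve_left (by omega)

theorem AddSubmonoid.le_saturationIn {A : Type*} [AddCommGroup A] (N : AddSubmonoid A) :
    N ≤ N.saturationIn := fun x hx => ⟨1, le_refl 1, by simpa using hx⟩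

theorem AddSubmonoid.saturationIn_mono {A : Type*} [AddCommGroup A] {M N : AddSubmonoid A}
    (h : M ≤ N) : M.saturationIn ≤ N.saturationIn := fun _ ⟨n, hn, hx⟩ => ⟨n, hn, h hx⟩

/-- If integer coordinates `φ` on `A` are dual to the elements `r i` and vanish on `S`, then
the `r i` split off freely from the saturated submonoid generated by `S` and the `r i`. -/
theorem AddSubmonoid.saturationIn_splitting {A ι : Type*} [AddCommGroup A] [Fintype ι]
    [DecidableEq ι] (S : Set A) (r : ι → A) (φ : A →+ (ι → ℤ)) (hS : ∀ s ∈ S, φ s = 0)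
    (hr : ∀ i, φ (r i) = Pi.single i 1) (M : AddSubmonoid A)
    (hM : M = closure (S ∪ Set.range r)) :
    ∃ f : (↥((closure S).saturationIn) × (ι → ℕ)) ≃+ ↥M.saturationIn,
      ∀ x a, ((f (x, a) : A)) = (x : A) + ∑ i, a i • r i := by
  subst hM
  have hφr (a : ι → ℕ) : φ (∑ i, a i • r i) = fun i => (a i : ℤ) := by
    ext j
    simp [map_sum, hr, Finset.sum_apply, Pi.single_apply]
  have hmem (x : (closure S).saturationIn) (a : ι → ℕ) :
      (x : A) + ∑ i, a i • r i ∈ (closure (S ∪ Set.range r)).saturationIn := by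
    refine add_mem (saturationIn_mono (closure_mono Set.subset_union_left) x.2) ?_
    refine le_saturationIn _ (_root_.sum_mem fun i _ => _root_.nsmul_mem (subset_closure ?_) _)
    exact Or.inr ⟨i, rfl⟩
  let f : (↥((closure S).saturationIn) × (ι → ℕ)) →+
      ↥(closure (S ∪ Set.range r)).saturationIn :=
    { toFun := fun p => ⟨p.1 + ∑ i, p.2 i • r i, hmem p.1 p.2⟩
      map_zero' := by ext; simp
      map_add' := fun p p' => by
        ext
        simp only [Prod.fst_add, Prod.snd_add, Pi.add_apply, add_smul, AddSubmonoid.coe_add,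
          Finset.sum_add_distrib]
        abel }
  refine ⟨AddEquiv.ofBijective f ⟨?_, ?_⟩, fun _ _ => rfl⟩
  · rintro ⟨x, a⟩ ⟨y, b⟩ h
    have h' : (x : A) + ∑ i, a i • r i = y + ∑ i, b i • r i := congrArg Subtype.val h
    have hab : a = b := by
      have h2 := congrArg φ h'
      rw [map_add, map_add, hφr, hφr, map_eq_zero_of_mem_saturationIn_closure hS x.2,
        map_eq_zero_of_mem_saturationIn_closure hS y.2] at h2
      ext i
      simpa using congrFun h2 i
    subst hab
    exact Prod.ext (Subtype.ext (add_right_cancel h')) rfl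
  · rintro ⟨x, n, hn, hx⟩
    rw [closure_union, mem_sup] at hx
    obtain ⟨s, hs, t, ht, hst⟩ := hx
    obtain ⟨a, rfl⟩ := mem_closure_range_iff_of_fintype.1 ht
    have hφs : φ s = 0 := map_eq_zero_of_mem_saturationIn_closure hS (le_saturationIn _ hs)
    have hna (i : ι) : (a i : ℤ) = n * φ x i := by
      have h2 := congrFun (congrArg φ hst) i
      rw [map_add, hφs, hφr, map_nsmul] at h2
      simpa using h2
    have hnn (i : ι) : 0 ≤ φ x i := by
      have : (0 : ℤ) < n := by exact_mod_cast hn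
      exact nonneg_of_mul_nonneg_right (by rw [← hna]; positivity) this
    -- the coordinates of a preimage of `x` are read off by `φ`
    have hb (i : ι) : a i = n * (φ x i).toNat := by
      zify
      rw [Int.toNat_of_nonneg (hnn i), hna]
    refine ⟨(⟨x - ∑ i, (φ x i).toNat • r i, n, hn, ?_⟩, fun i => (φ x i).toNat),
      Subtype.ext (sub_add_cancel _ _)⟩
    have : n • (x - ∑ i, (φ x i).toNat • r i) = s := by
      rw [smul_sub, ← hst, Finset.smul_sum]
      simp only [hb, mul_smul, add_sub_cancel_right]
    rw [this]
    exact hs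

namespace LogCombType

variable (G : LogCombType)

/-- A homomorphism to a family of integers factors through the quotient by torsion. -/
def liftTorsion {P ι : Type*} [AddCommGroup P] (ψ : P →+ (ι → ℤ)) :
    P ⧸ AddCommGroup.torsion P →+ (ι → ℤ) :=
  QuotientAddGroup.lift _ ψ fun x hx => by
    obtain ⟨n, hn, h⟩ := isOfFinAddOrder_iff_nsmul_eq_zero.1 hx
    have h1 : n • ψ x = 0 := by rw [← map_nsmul, h, map_zero]
    exact (smul_eq_zero.1 h1).resolve_left (by omega)

open Classical in
/-- The `ρ`-coordinates at the edges of contact order zero, on the free group. -/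
noncomputable def coordFree : G.Free →+ ({l : G.E // G.c l = 0} → ℤ) :=
  FreeAbelianGroup.lift (Sum.elim 0 fun l i => if l = i.1 then 1 else 0)

open Classical in
/-- The edges `l` with `c_l = 0` have well defined integer `ρ_l`-coordinates on `B`: no
relation defining `B` involves such a `ρ_l`. -/
theorem exists_coord (Vmax : Set G.V) :
    ∃ φ : G.B Vmax →+ ({l : G.E // G.c l = 0} → ℤ),
      (∀ v, φ (G.qB Vmax (G.eA v)) = 0) ∧
      ∀ l, φ (G.qB Vmax (G.ρA l)) = fun i => if l = i.1 then 1 else 0 := by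
  have he (v : G.V) : G.coordFree (G.eFree v) = 0 := by simp [coordFree, eFree]
  have hρ (l : G.E) : G.coordFree (G.ρFree l) = fun i => if l = i.1 then 1 else 0 := by
    simp [coordFree, ρFree]
  have h1 : G.rels ≤ G.coordFree.ker := by
    refine (AddSubgroup.closure_le _).2 ?_
    rintro x (⟨v, -, rfl⟩ | ⟨l, rfl⟩)
    · exact he v
    · change G.coordFree _ = 0
      rw [map_sub, map_add, map_nsmul, he, he, hρ]
      ext i
      by_cases h : l = i.1
      · -- here `c_l = 0`, so `ρ_l` drops out of the relation
        simp [h, i.2]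
      · simp [h]
  let φA : G.A →+ ({l : G.E // G.c l = 0} → ℤ) :=
    liftTorsion (QuotientAddGroup.lift G.rels G.coordFree h1)
  have hAe (v : G.V) : φA (G.eA v) = 0 := he v
  have hAρ (l : G.E) : φA (G.ρA l) = fun i => if l = i.1 then 1 else 0 := hρ l
  have h2 : G.simRel Vmax ≤ φA.ker := by
    refine (AddSubgroup.closure_le _).2 ?_
    rintro x ⟨v, -, w, -, rfl⟩
    change φA _ = 0
    rw [map_sub, hAe, hAe, sub_zero]
  exact ⟨liftTorsion (QuotientAddGroup.lift _ φA h2), hAe, hAρ⟩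

/-- The submonoid `N′` is generated by the generators of `M̄(G, V_max)′` together with
the `q(ρ_l)`, `c_l = 0`. -/
theorem Nmax_eq_closure (Vmax : Set G.V) (v₀ : G.V) :
    G.Nmax Vmax v₀ = AddSubmonoid.closure
      (((Set.range fun v : G.V => G.qB Vmax (G.eA v)) ∪
        {x | ∃ l : G.E, G.c l ≠ 0 ∧ x = G.qB Vmax (G.ρA l)} ∪
        Set.range fun v : G.V => G.emaxB Vmax v₀ - G.qB Vmax (G.eA v)) ∪
      Set.range fun l : {l : G.E // G.c l = 0} => G.qB Vmax (G.ρA l.1)) := by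
  have hN : G.qB Vmax '' (G.N : Set G.A) = ((G.N.map (G.qB Vmax) : AddSubmonoid _) : Set _) := rfl
  rw [Nmax, hN, N, AddMonoidHom.map_mclosure]
  refine le_antisymm (AddSubmonoid.closure_le.2 (Set.union_subset
    (AddSubmonoid.closure_le.2 ?_) ?_)) (AddSubmonoid.closure_le.2 ?_)
  · rintro _ ⟨_, ⟨v, rfl⟩ | ⟨l, rfl⟩, rfl⟩ <;> apply AddSubmonoid.subset_closure
    · exact Or.inl (Or.inl (Or.inl ⟨v, rfl⟩))
    · by_cases h : G.c l = 0
      · exact Or.inr ⟨⟨l, h⟩, rfl⟩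
      · exact Or.inl (Or.inl (Or.inr ⟨l, h, rfl⟩))
  · rintro _ ⟨v, rfl⟩
    exact AddSubmonoid.subset_closure (Or.inl (Or.inr ⟨v, rfl⟩))
  · rintro _ (((⟨v, rfl⟩ | ⟨l, -, rfl⟩) | ⟨v, rfl⟩) | ⟨l, rfl⟩) <;>
      apply AddSubmonoid.subset_closure
    · exact Or.inl (AddSubmonoid.subset_closure ⟨_, Or.inl ⟨v, rfl⟩, rfl⟩)
    · exact Or.inl (AddSubmonoid.subset_closure ⟨_, Or.inr ⟨l, rfl⟩, rfl⟩)
    · exact Or.inr ⟨v, rfl⟩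
    · exact Or.inl (AddSubmonoid.subset_closure ⟨_, Or.inr ⟨l.1, rfl⟩, rfl⟩)

end LogCombType

/-- Canonical splitting `M̄(G, V_max) ≅ M̄(G, V_max)′ ⊕ ℕ^{E₀}`,
where `E₀` is the set of edges with zero contact order and `M̄(G, V_max)′` is the
smallest saturated submonoid of `B` containing the `q(e_v)`, the `q(ρ_l)` with
`c_l > 0`, and the elements `e_max − q(e_v)`; moreover every `q(e_v)` lies in
`M̄(G, V_max)′`. -/
theorem LogCombType.maxMonoid_splitting (G : LogCombType)
    (Vmax : Set G.V) (v₀ : G.V) (hv₀ : v₀ ∈ Vmax) :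
    ∃ f : (↥((AddSubmonoid.closure
            ((Set.range fun v : G.V => G.qB Vmax (G.eA v)) ∪
             {x | ∃ l : G.E, G.c l ≠ 0 ∧ x = G.qB Vmax (G.ρA l)} ∪
             Set.range fun v : G.V =>
               G.emaxB Vmax v₀ - G.qB Vmax (G.eA v))).saturationIn) ×
          ({l : G.E // G.c l = 0} → ℕ)) ≃+ ↥(G.maxMonoid Vmax v₀),
      (∀ x a, ((f (x, a) : G.B Vmax)) =
        (x : G.B Vmax) + ∑ l : {l : G.E // G.c l = 0}, a l • G.qB Vmax (G.ρA l.1)) ∧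
      (∀ v : G.V, G.qB Vmax (G.eA v) ∈ (AddSubmonoid.closure
            ((Set.range fun v : G.V => G.qB Vmax (G.eA v)) ∪
             {x | ∃ l : G.E, G.c l ≠ 0 ∧ x = G.qB Vmax (G.ρA l)} ∪
             Set.range fun v : G.V =>
               G.emaxB Vmax v₀ - G.qB Vmax (G.eA v))).saturationIn) := by
  classical
  obtain ⟨φ, he, hρ⟩ := G.exists_coord Vmax
  obtain ⟨f, hf⟩ := AddSubmonoid.saturationIn_splitting
    ((Set.range fun v : G.V => G.qB Vmax (G.eA v)) ∪
      {x | ∃ l : G.E, G.c l ≠ 0 ∧ x = G.qB Vmax (G.ρA l)} ∪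
      Set.range fun v : G.V => G.emaxB Vmax v₀ - G.qB Vmax (G.eA v))
    (fun l : {l : G.E // G.c l = 0} => G.qB Vmax (G.ρA l.1)) φ
    (by
      rintro _ ((⟨v, rfl⟩ | ⟨l, hl, rfl⟩) | ⟨v, rfl⟩)
      · exact he v
      · rw [hρ]
        ext i
        -- `l ≠ i` since `c_l ≠ 0` while `c_i = 0`
        have : l ≠ i.1 := fun h => hl (h ▸ i.2)
        simp [this]
      · simp only [LogCombType.emaxB, map_sub, he, sub_zero])
    (by
      intro l
      rw [hρ]
      ext i
      simp [Pi.single_apply, Subtype.ext_iff, eq_comm])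
    _ (G.Nmax_eq_closure Vmax v₀)
  refine ⟨f, hf, fun v => AddSubmonoid.le_saturationIn _ (AddSubmonoid.subset_closure ?_)⟩
  exact Or.inl (Or.inl ⟨v, rfl⟩)
end

section
/- Let A be an abelian group, S ⊆ A a subset, N ⊆ A the submonoid generated by S, and M = {x ∈ A : n·x ∈ N for some integer n ≥ 1} the saturation of N in A. Let P₁ be a sharp commutative monoid (p + q = 0 implies p = 0) and P₂ a commutative monoid in which n·p = 0 for some integer n ≥ 1 implies p = 0. Let h₁ : M → P₁ and h₂ : M → P₂ be monoid homomorphisms such that for every s ∈ S, h₁(s) = 0 implies h₂(s) = 0. Then for every x ∈ M, h₁(x) = 0 implies h₂(x) = 0. -/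
/-- Let `M` be the saturation in an abelian group `A` of the
submonoid generated by a subset `S`. Let `P₁` be a sharp commutative monoid and
`P₂` a commutative monoid with no nonzero elements killed by a positive integer.
If homomorphisms `h₁ : M → P₁` and `h₂ : M → P₂` are such that `h₂` kills every
generator `s ∈ S` killed by `h₁`, then `h₂` kills every element of `M` killed by
`h₁`. -/
theorem saturation_hom_vanishing
    {A : Type*} [AddCommGroup A] (S : Set A)
    (P₁ P₂ : Type*) [AddCommMonoid P₁] [AddCommMonoid P₂]
    (hsharp : ∀ p q : P₁, p + q = 0 → p = 0)
    (htor : ∀ (n : ℕ), 1 ≤ n → ∀ p : P₂, n • p = 0 → p = 0)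
    (h₁ : ↥((AddSubmonoid.closure S).saturationIn) →+ P₁)
    (h₂ : ↥((AddSubmonoid.closure S).saturationIn) →+ P₂)
    (hgen : ∀ s ∈ S, ∀ hs : s ∈ (AddSubmonoid.closure S).saturationIn,
      h₁ ⟨s, hs⟩ = 0 → h₂ ⟨s, hs⟩ = 0) :
    ∀ x : ↥((AddSubmonoid.closure S).saturationIn), h₁ x = 0 → h₂ x = 0 := by
  -- `key` is the claim on the unsaturated monoid, proved by induction on the closure.
  have key : ∀ y ∈ AddSubmonoid.closure S,
      ∀ hy : y ∈ (AddSubmonoid.closure S).saturationIn, h₁ ⟨y, hy⟩ = 0 → h₂ ⟨y, hy⟩ = 0 := by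
    intro y hyN
    induction hyN using AddSubmonoid.closure_induction with
    | mem s hs => exact hgen s hs
    | zero => exact fun _ _ => map_zero h₂
    | add a b ha hb iha ihb =>
      intro hab h
      have ha' : a ∈ (AddSubmonoid.closure S).saturationIn := ⟨1, le_rfl, by simpa using ha⟩
      have hb' : b ∈ (AddSubmonoid.closure S).saturationIn := ⟨1, le_rfl, by simpa using hb⟩
      have e : (⟨a + b, hab⟩ : ↥((AddSubmonoid.closure S).saturationIn)) =
          ⟨a, ha'⟩ + ⟨b, hb'⟩ := rfl
      rw [e, map_add] at h
      rw [e, map_add, iha ha' (hsharp _ _ h), ihb hb' (hsharp _ _ (by rwa [add_comm] at h)),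
        add_zero]
  intro x hx
  obtain ⟨n, hn, hnx⟩ := x.2
  refine htor n hn _ ?_
  rw [← map_nsmul]
  exact key (n • (x : A)) hnx (n • x).2
    (show h₁ (n • x) = 0 by rw [map_nsmul, hx, nsmul_zero])
end

section
/- Let V and E be finite sets, let src, tgt : E → V be maps (a finite directed multigraph, loops and multiple edges allowed), and let d : V → ℤ. Then the set of functions c : E → ℕ satisfying the following two conditions is finite: (i) for every vertex v ∈ V, d(v) = Σ_{e : tgt(e) = v} c(e) − Σ_{e : src(e) = v} c(e) (as integers); (ii) for every directed cycle, i.e. every nonempty finite sequence of edges e₁, …, e_k with tgt(e_i) = src(e_{i+1}) for 1 ≤ i < k and tgt(e_k) = src(e₁), one has c(e_i) = 0 for all i. -/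
open Finset

/-!
The labels are bounded uniformly by `∑ v, |d v|`. Fix an edge `e₀` with nonzero label and let `S` be
the set of vertices reachable from `tgt e₀` along directed edges. Summing the balance condition over
`S` gives `∑ v ∈ S, d v` = (labels entering `S`) − (labels leaving `S`). No edge leaves `S`, because
`S` is closed under following edges; and `e₀` enters `S`, because `src e₀ ∈ S` would close up to a
directed cycle through `e₀`, forcing `c e₀ = 0`. Hence `c e₀ ≤ ∑ v ∈ S, d v ≤ ∑ v, |d v|`.
-/

/-- A vertex reachable from the target of `e₀` is the end of an indexed edge path starting
with `e₀`. -/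
lemma exists_path_of_reachable {V E : Type} (src tgt : E → V) (e₀ : E) (w : V)
    (h : Relation.ReflTransGen (fun u v => ∃ e, src e = u ∧ tgt e = v) (tgt e₀) w) :
    ∃ (k : ℕ) (es : Fin (k + 1) → E), es 0 = e₀ ∧
      (∀ i : Fin k, tgt (es i.castSucc) = src (es i.succ)) ∧ tgt (es (Fin.last k)) = w := by
  induction h with
  | refl => exact ⟨0, fun _ => e₀, rfl, fun i => i.elim0, rfl⟩
  | tail _ hstep ih =>
    obtain ⟨k, es, h0, hc, hl⟩ := ih
    obtain ⟨e, he, he'⟩ := hstep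
    refine ⟨k + 1, Fin.snoc (α := fun _ => E) es e, ?_, ?_, ?_⟩
    · rw [← Fin.castSucc_zero, Fin.snoc_castSucc, h0]
    · intro i
      induction i using Fin.lastCases with
      | last => rw [Fin.snoc_castSucc, Fin.succ_last, Fin.snoc_last, hl, he]
      | cast i => rw [Fin.snoc_castSucc, Fin.succ_castSucc, Fin.snoc_castSucc, hc i]
    · rw [Fin.snoc_last, he']

/-- Summing a fibrewise sum over a set of vertices counts each edge whose image lies in the set. -/
lemma sum_fiberwise_mem {V E : Type} [Fintype E] [DecidableEq V] (f : E → V) (a : E → ℤ)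
    (S : Finset V) :
    ∑ v ∈ S, ∑ e ∈ Finset.univ.filter (fun e => f e = v), a e
      = ∑ e, if f e ∈ S then a e else 0 := by
  simp_rw [Finset.sum_filter]
  rw [Finset.sum_comm]
  exact Finset.sum_congr rfl fun e _ => by rw [Finset.sum_ite_eq]

/-- On a finite directed multigraph `(V, E, src, tgt)` with a
prescribed integer `d v` at every vertex, the set of edge labelings `c : E → ℕ`
such that (i) at every vertex `v`, `d v` equals the sum of the labels of incoming
edges minus the sum of the labels of outgoing edges, and (ii) every edge lying on
a directed cycle has label `0`, is finite. -/
theorem finite_contact_orders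
    (V E : Type) [Fintype V] [Fintype E] [DecidableEq V]
    (src tgt : E → V) (d : V → ℤ) :
    {c : E → ℕ |
      (∀ v : V,
        d v = (∑ e ∈ Finset.univ.filter fun e => tgt e = v, (c e : ℤ)) -
              (∑ e ∈ Finset.univ.filter fun e => src e = v, (c e : ℤ))) ∧
      (∀ (k : ℕ) (es : Fin (k + 1) → E),
        (∀ i : Fin k, tgt (es i.castSucc) = src (es i.succ)) →
        tgt (es (Fin.last k)) = src (es 0) →
        ∀ i : Fin (k + 1), c (es i) = 0)}.Finite := by
  classical
  refine (Set.finite_Iic (fun _ : E => (∑ v, |d v|).toNat)).subset ?_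
  rintro c ⟨hd, hcyc⟩ e₀
  rw [← Int.ofNat_le]
  refine le_trans ?_ (Int.self_le_toNat _)
  by_cases h0 : c e₀ = 0
  · simpa [h0] using Finset.sum_nonneg fun v _ => abs_nonneg (d v)
  let S : Finset V := Finset.univ.filter
    (Relation.ReflTransGen (fun u v => ∃ e, src e = u ∧ tgt e = v) (tgt e₀))
  have htgt : tgt e₀ ∈ S := by simp [S, Relation.ReflTransGen.refl]
  have hclosed : ∀ e, src e ∈ S → tgt e ∈ S := by
    intro e he
    simp only [S, Finset.mem_filter, Finset.mem_univ, true_and] at he ⊢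
    exact he.tail ⟨e, rfl, rfl⟩
  have hsrc : src e₀ ∉ S := by
    intro hs
    simp only [S, Finset.mem_filter, Finset.mem_univ, true_and] at hs
    obtain ⟨k, es, hes, hc, hl⟩ := exists_path_of_reachable src tgt e₀ _ hs
    exact h0 (hes ▸ hcyc k es hc (by rw [hl, hes]) 0)
  have hsum : ∑ v ∈ S, d v
      = ∑ e, ((if tgt e ∈ S then (c e : ℤ) else 0) - if src e ∈ S then (c e : ℤ) else 0) := by
    rw [Finset.sum_congr rfl fun v _ => hd v, Finset.sum_sub_distrib, sum_fiberwise_mem,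
      sum_fiberwise_mem, Finset.sum_sub_distrib]
  have hle : (c e₀ : ℤ) ≤ ∑ v ∈ S, d v := by
    rw [hsum]
    -- every edge contributes a nonnegative amount, and `e₀` contributes exactly `c e₀`
    refine le_trans (le_of_eq ?_) (Finset.single_le_sum (fun e _ => ?_) (Finset.mem_univ e₀))
    · simp [htgt, hsrc]
    · have := hclosed e
      split_ifs <;> simp_all
  calc (c e₀ : ℤ) ≤ ∑ v ∈ S, d v := hle
    _ ≤ ∑ v ∈ S, |d v| := Finset.sum_le_sum fun v _ => le_abs_self _
    _ ≤ ∑ v, |d v| :=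
      Finset.sum_le_sum_of_subset_of_nonneg (Finset.subset_univ _) fun v _ _ => abs_nonneg _
end
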